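/- Composition of weighted and unweighted alphabetic homomorphisms: if ĥ₁: Γ* → (Δ* → 𝒜) is an 𝒜-weighted alphabetic homomorphism and ĥ₂: Σ* → Γ* is an alphabetic homomorphism, then ĥ₁ ∘ ĥ₂: Σ* → (Δ* → 𝒜) is an 𝒜-weighted alphabetic homomorphism; conversely, every 𝒜-weighted alphabetic homomorphism equals ĥ₁ ∘ ĥ₂ for some 𝒜-weighted alphabetic homomorphism ĥ₁ and some alphabetic homomorphism ĥ₂. Hence aHOM(𝒜) ∘ aHOM = aHOM(𝒜). -/

import Mathlib

namespace CS

/-! ### Dyck languages -/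

/-- The smallest monoid congruence on `(S ⊕ S)*` (opening/closing brackets)
satisfying the cancellation `σ σ̄ ≡ ε`. -/
inductive DyckRel (S : Type) : List (S ⊕ S) → List (S ⊕ S) → Prop
  | cancel (σ : S) : DyckRel S [Sum.inl σ, Sum.inr σ] []
  | refl (w : List (S ⊕ S)) : DyckRel S w w
  | symm {u v} : DyckRel S u v → DyckRel S v u
  | trans {u v w} : DyckRel S u v → DyckRel S v w → DyckRel S u w
  | append {u v u' v'} : DyckRel S u v → DyckRel S u' v' →
      DyckRel S (u ++ u') (v ++ v')

/-- The Dyck language `D(S) = [ε]_{≡_S}`. -/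
def DyckLang (S : Type) : Set (List (S ⊕ S)) := {w | DyckRel S w []}

/-- The smallest monoid congruence on `(S ⊕ S)*` closed under the cancellation rule
of congruence multiple Dyck languages:  whenever `{σ₁, …, σ_ℓ} ∈ P`,
`u₀, …, u_ℓ, v₁, …, v_ℓ ∈ D(S)` and `v₁ ⋯ v_ℓ ≡ ε`, then
`u₀ σ₁ v₁ σ̄₁ u₁ ⋯ σ_ℓ v_ℓ σ̄_ℓ u_ℓ ≡ u₀ u₁ ⋯ u_ℓ`.
The data of `σ₁, …, σ_ℓ`, `v₁, …, v_ℓ` and `u₁, …, u_ℓ` is given by a list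
`ts` of triples `(σᵢ, vᵢ, uᵢ)`. -/
inductive MDyckRel (S : Type) (P : Set (Set S)) : List (S ⊕ S) → List (S ⊕ S) → Prop
  | refl (w : List (S ⊕ S)) : MDyckRel S P w w
  | symm {u v} : MDyckRel S P u v → MDyckRel S P v u
  | trans {u v w} : MDyckRel S P u v → MDyckRel S P v w → MDyckRel S P u w
  | append {u v u' v'} : MDyckRel S P u v → MDyckRel S P u' v' →
      MDyckRel S P (u ++ u') (v ++ v')
  | cancel (u0 : List (S ⊕ S)) (ts : List (S × List (S ⊕ S) × List (S ⊕ S))) :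
      (ts.map Prod.fst).Nodup →
      {σ | σ ∈ ts.map Prod.fst} ∈ P →
      u0 ∈ DyckLang S →
      (∀ t ∈ ts, t.2.1 ∈ DyckLang S ∧ t.2.2 ∈ DyckLang S) →
      MDyckRel S P ((ts.map (fun t => t.2.1)).flatten) [] →
      MDyckRel S P
        (u0 ++ (ts.map (fun t => Sum.inl t.1 :: t.2.1 ++ [Sum.inr t.1] ++ t.2.2)).flatten)
        (u0 ++ (ts.map (fun t => t.2.2)).flatten)

/-- The congruence multiple Dyck language `mD_c(S, P) = [ε]_{≡_{S,P}}`. -/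
def MDyckLang (S : Type) (P : Set (Set S)) : Set (List (S ⊕ S)) := {w | MDyckRel S P w []}

/-- The class of congruence multiple Dyck languages over `S` of dimension at most `k`. -/
def cmDyckClass (k : ℕ) (S : Type) : Set (Set (List (S ⊕ S))) :=
  {L | ∃ Pa : Set (Set S), Setoid.IsPartition Pa ∧ (∀ p ∈ Pa, p.ncard ≤ k) ∧
        L = MDyckLang S Pa}

/-! ### Complete commutative strong bimonoids -/

/-- A complete commutative strong bimonoid: two commutative monoid structures
`(A, +, 0)` and `(A, ·, 1)` with `0` multiplicatively absorbing, together with an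
infinitary sum operation satisfying the axioms of Droste and Vogler. -/
class CCSBimonoid (A : Type) extends AddCommMonoid A, CommMonoid A where
  zero_mul' : ∀ a : A, 0 * a = 0
  mul_zero' : ∀ a : A, a * 0 = 0
  bigSum : {I : Type} → Set I → (I → A) → A
  bigSum_empty : ∀ {I : Type} (f : I → A), bigSum (∅ : Set I) f = 0
  bigSum_singleton : ∀ {I : Type} (j : I) (f : I → A), bigSum {j} f = f j
  bigSum_pair : ∀ {I : Type} (j k : I) (f : I → A), j ≠ k →
      bigSum {j, k} f = f j + f k
  bigSum_partition : ∀ {I J : Type} [Countable J] (T : J → Set I) (f : I → A),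
      (∀ j j', j ≠ j' → T j ∩ T j' = ∅) →
      bigSum (Set.univ : Set J) (fun j => bigSum (T j) f) = bigSum (⋃ j, T j) f

/-! ### Multiple context-free grammars -/

/-- A production `A → [u₁, …, u_s](A₁, …, A_ℓ)` of an MCFG.  Letters of the
components are either terminals (`Sum.inl`) or variables `x_i^j`, encoded
0-based as pairs `(i, j)` (`Sum.inr`).  `wf` states well-sortedness of the
variables and `linear` that every variable occurs at most once in `u₁ ⋯ u_s`. -/
structure Production (Δ N : Type) (sortN : N → ℕ) where
  lhs : N
  rhs : List N
  comp : List (List (Δ ⊕ ℕ × ℕ))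
  comp_len : comp.length = sortN lhs
  wf : ∀ p ∈ comp.flatten.filterMap Sum.getRight?,
        ∃ h : p.1 < rhs.length, p.2 < sortN (rhs.get ⟨p.1, h⟩)
  linear : (comp.flatten.filterMap Sum.getRight?).Nodup

namespace Production

variable {Δ N : Type} {sortN : N → ℕ}

/-- The list of occurrences of variables in the components of a production. -/
def vars (ρ : Production Δ N sortN) : List (ℕ × ℕ) :=
  ρ.comp.flatten.filterMap Sum.getRight?

/-- A production is non-deleting if every variable `x_i^j` occurs (at least,
hence by linearity exactly, once). -/
def NonDeleting (ρ : Production Δ N sortN) : Prop :=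
  ∀ (i : ℕ) (h : i < ρ.rhs.length), ∀ j < sortN (ρ.rhs.get ⟨i, h⟩), (i, j) ∈ ρ.vars

/-- A production is terminal-free if no terminal occurs in its components. -/
def TerminalFree (ρ : Production Δ N sortN) : Prop :=
  ∀ u ∈ ρ.comp, ∀ v ∈ u, ∃ p : ℕ × ℕ, v = Sum.inr p

end Production

/-- Substitution of argument tuples for the variables of a component. -/
def subst {Δ : Type} (args : List (List (List Δ))) (u : List (Δ ⊕ ℕ × ℕ)) : List Δ :=
  u.flatMap (fun v => match v with
    | Sum.inl d => [d]
    | Sum.inr (i, j) => (args.getD i []).getD j [])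

/-- Rose trees; derivations of an MCFG are well-sorted trees over the productions. -/
inductive Tree (P : Type) : Type
  | node : P → List (Tree P) → Tree P

/-- The yield of a derivation tree: evaluate the string functions bottom-up. -/
def Tree.yield {Δ N : Type} {sortN : N → ℕ} :
    Tree (Production Δ N sortN) → List (List Δ)
  | .node ρ ts => ρ.comp.map (subst (ts.attach.map (fun t => Tree.yield t.1)))
decreasing_by simp_wf; have := List.sizeOf_lt_of_mem t.2; omega

/-- Relabelling of derivation trees. -/
def Tree.map {P Q : Type} (f : P → Q) : Tree P → Tree Q
  | .node ρ ts => .node (f ρ) (ts.attach.map (fun t => Tree.map f t.1))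
decreasing_by simp_wf; have := List.sizeOf_lt_of_mem t.2; omega

/-- Well-sorted derivation trees over a set of productions, from a given
non-terminal. -/
inductive WFDeriv {Δ N : Type} {sortN : N → ℕ} (P : Set (Production Δ N sortN)) :
    N → Tree (Production Δ N sortN) → Prop
  | node (ρ : Production Δ N sortN) (ts : List (Tree (Production Δ N sortN))) :
      ρ ∈ P → ts.length = ρ.rhs.length →
      (∀ (i : ℕ) (h1 : i < ts.length) (h2 : i < ρ.rhs.length),
        WFDeriv P (ρ.rhs.get ⟨i, h2⟩) (ts.get ⟨i, h1⟩)) →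
      WFDeriv P ρ.lhs (Tree.node ρ ts)

/-- A multiple context-free grammar over the terminal alphabet `Δ`. -/
structure MCFG (Δ : Type) where
  N : Type
  sortN : N → ℕ
  S : N
  sort_S : sortN S = 1
  P : Set (Production Δ N sortN)

namespace MCFG

variable {Δ : Type}

/-- The set `D_G` of derivations of `G` (from the initial non-terminal). -/
def Derivs (G : MCFG Δ) : Set (Tree (Production Δ G.N G.sortN)) :=
  {d | WFDeriv G.P G.S d}

/-- The language of an MCFG. -/
def lang (G : MCFG Δ) : Set (List Δ) :=
  {w | ∃ d ∈ G.Derivs, d.yield = [w]}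

/-- `G` has fan-out at most `k`. -/
def FanoutLE (G : MCFG Δ) (k : ℕ) : Prop := ∀ ρ ∈ G.P, ρ.comp.length ≤ k

/-- `G` is non-deleting. -/
def NonDeleting (G : MCFG Δ) : Prop := ∀ ρ ∈ G.P, ρ.NonDeleting

end MCFG

/-- The class of multiple context-free languages over `Δ` of fan-out at most `k`. -/
def MCFL (k : ℕ) (Δ : Type) : Set (Set (List Δ)) :=
  {L | ∃ G : MCFG Δ, Finite G.N ∧ G.P.Finite ∧ G.FanoutLE k ∧ G.lang = L}

/-! ### Weighted MCFGs -/

/-- The weight of a derivation tree: multiply the weights of the productions at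
all positions. -/
def Tree.weight {P A : Type} [CCSBimonoid A] (μ : P → A) : Tree P → A
  | .node ρ ts => μ ρ * (ts.attach.map (fun t => Tree.weight μ t.1)).prod
decreasing_by simp_wf; have := List.sizeOf_lt_of_mem t.2; omega

/-- An `A`-weighted MCFG. -/
structure WMCFG (A Δ : Type) [CCSBimonoid A] extends MCFG Δ where
  μ : Production Δ N sortN → A
  μ_ne : ∀ ρ ∈ P, μ ρ ≠ 0

/-- The weighted language induced by an `A`-weighted MCFG:
`⟦G⟧(w) = Σ_{d derivation of w} μ̂(d)`. -/
noncomputable def WMCFG.sem {A Δ : Type} [CCSBimonoid A] (G : WMCFG A Δ) :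
    List Δ → A :=
  fun w => CCSBimonoid.bigSum
    {d | WFDeriv G.P G.S d ∧ d.yield = [w]} (fun d => d.weight G.μ)

/-- The class of `A`-weighted multiple context-free languages over `Δ`
of fan-out at most `k`. -/
def WMCFL (k : ℕ) (A Δ : Type) [CCSBimonoid A] : Set (List Δ → A) :=
  {L | ∃ G : WMCFG A Δ, Finite G.N ∧ G.P.Finite ∧ G.toMCFG.FanoutLE k ∧ G.sem = L}

/-! ### Weighted homomorphisms -/

/-- A weighted language is a monomial if its support has at most one element. -/
def IsMonomial {Γ A : Type} [CCSBimonoid A] (m : List Γ → A) : Prop :=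
  ∀ u v, m u ≠ 0 → m v ≠ 0 → u = v

/-- `g` induces an `A`-weighted homomorphism. -/
def WeightedHom {Δ Γ A : Type} [CCSBimonoid A] (g : Δ → List Γ → A) : Prop :=
  ∀ δ, IsMonomial (g δ)

/-- `g` induces an `A`-weighted alphabetic homomorphism: all supports consist of
words of length at most 1. -/
def AlphabeticWeightedHom {Δ Γ A : Type} [CCSBimonoid A] (g : Δ → List Γ → A) : Prop :=
  WeightedHom g ∧ ∀ δ u, g δ u ≠ 0 → u.length ≤ 1

/-- The `A`-weighted homomorphism `ĝ` induced by `g`: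
`ĝ(δ₁⋯δ_k)(u) = Σ_{u = u₁⋯u_k} g(δ₁)(u₁)·…·g(δ_k)(u_k)`. -/
noncomputable def whom {Δ Γ A : Type} [CCSBimonoid A] (g : Δ → List Γ → A)
    (w : List Δ) : List Γ → A :=
  fun u => CCSBimonoid.bigSum
    {ds : List (List Γ) | ds.length = w.length ∧ ds.flatten = u}
    (fun ds => ((w.zip ds).map (fun p => g p.1 p.2)).prod)

/-- The image of a language under an `A`-weighted homomorphism:
`ĝ(L)(u) = Σ_{w ∈ L} ĝ(w)(u)`. -/
noncomputable def whomImage {Δ Γ A : Type} [CCSBimonoid A] (g : Δ → List Γ → A)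
    (L : Set (List Δ)) : List Γ → A :=
  fun u => CCSBimonoid.bigSum L (fun w => whom g w u)

/-! ### Regular languages -/

/-- A language is regular if it is recognised by a finite automaton. -/
def IsRegular {α : Type} (L : Set (List α)) : Prop :=
  ∃ (Q : Type) (_ : Fintype Q) (M : DFA α Q), ∀ w, w ∈ M.accepts ↔ w ∈ L

end CS
namespace CS

/-! ### The unweighted MCFG for a weighted MCFG (weight separation) -/

/-- Relabel the terminals of a component into the marked alphabet. -/
def markify (M : Type) {Δ : Type} (u : List (Δ ⊕ ℕ × ℕ)) :
    List ((Δ ⊕ M) ⊕ ℕ × ℕ) :=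
  u.map (Sum.map Sum.inl id)

lemma markify_filterMap (M : Type) {Δ : Type} (u : List (Δ ⊕ ℕ × ℕ)) :
    (markify M u).filterMap Sum.getRight? = u.filterMap Sum.getRight? := by
  induction u with
  | nil => rfl
  | cons a l ih => cases a <;> first | exact ih | exact congrArg (List.cons _) ih

lemma filterMap_flatten {α β : Type} (f : α → Option β) (l : List (List α)) :
    l.flatten.filterMap f = (l.map (List.filterMap f)).flatten := by
  induction l <;> simp [*]

lemma ofFn_comp_get {α β : Type} (l : List α) (h : α → β) :
    List.ofFn (fun i : Fin l.length => h (l.get i)) = l.map h := by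
  conv_rhs => rw [← List.ofFn_get l]
  rw [List.map_ofFn]
  rfl

lemma mark_flatten_vars {Δ M : Type} (l : List (List (Δ ⊕ ℕ × ℕ)))
    (mk : Fin l.length → Δ ⊕ M) :
    (List.ofFn (fun i =>
        (Sum.inl (mk i) : (Δ ⊕ M) ⊕ ℕ × ℕ) :: markify M (l.get i))).flatten.filterMap
      Sum.getRight? = l.flatten.filterMap Sum.getRight? := by
  rw [filterMap_flatten, List.map_ofFn, filterMap_flatten]
  congr 1
  have : (List.filterMap Sum.getRight? ∘ fun i =>
      (Sum.inl (mk i) : (Δ ⊕ M) ⊕ ℕ × ℕ) :: markify M (l.get i))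
      = fun i : Fin l.length => (l.get i).filterMap Sum.getRight? := by
    funext i
    simp [List.filterMap_cons, Sum.getRight?, markify_filterMap]
  rw [this, ofFn_comp_get]

/-- The production of the unweighted MCFG `G_𝔹` corresponding to a production
`ρ = A → [u₁, …, u_s](A₁, …, A_m)`: each component `uᵢ` is prefixed with the
fresh terminal symbol `ρ^i` (encoded as `Sum.inr (ρ, i)`, 0-based). -/
def boolifyProd {Δ N : Type} {sortN : N → ℕ} (ρ : Production Δ N sortN) :
    Production (Δ ⊕ Production Δ N sortN × ℕ) N sortN where
  lhs := ρ.lhs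
  rhs := ρ.rhs
  comp := List.ofFn (fun i : Fin ρ.comp.length =>
    Sum.inl (Sum.inr (ρ, (i : ℕ))) ::
      markify (Production Δ N sortN × ℕ) (ρ.comp.get i))
  comp_len := by rw [List.length_ofFn]; exact ρ.comp_len
  wf := by
    intro p hp
    rw [mark_flatten_vars] at hp
    exact ρ.wf p hp
  linear := by
    rw [mark_flatten_vars]
    exact ρ.linear

/-- The unweighted MCFG `G_𝔹` for a weighted MCFG `G`. -/
def boolifyGrammar {A Δ : Type} [CCSBimonoid A] (G : WMCFG A Δ) :
    MCFG (Δ ⊕ Production Δ G.N G.sortN × ℕ) where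
  N := G.N
  sortN := G.sortN
  S := G.S
  sort_S := G.sort_S
  P := boolifyProd '' G.P

/-- The weight homomorphism `wts_G` for a weighted MCFG `G`:
`wts_G(δ) = 1.δ`, `wts_G(ρ^1) = μ(ρ).ε` and `wts_G(ρ^i) = 1.ε` for `i ≥ 2`. -/
noncomputable def wtsHom {A Δ : Type} [CCSBimonoid A] (G : WMCFG A Δ) :
    (Δ ⊕ Production Δ G.N G.sortN × ℕ) → List Δ → A := by
  classical
  exact fun γ w => match γ with
    | Sum.inl d => if w = [d] then 1 else 0
    | Sum.inr (ρ, i) => if w = [] then (if i = 0 then G.μ ρ else 1) else 0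

/-! ### The multiple Dyck grammar -/

/-- The sorted alphabet `Σ` induced by an `ℕ₊`-sorted set `(Δ, sd)`:
the opening parentheses `δ^[i]` (0-based: `i < sd δ`). -/
abbrev MSig (Δ : Type) (sd : Δ → ℕ) : Type := {p : Δ × ℕ // p.2 < sd p.1}

/-- The terminal alphabet `Δ̂` of the multiple Dyck grammar: opening and closing
parentheses. -/
abbrev MAlph (Δ : Type) (sd : Δ → ℕ) : Type := MSig Δ sd ⊕ MSig Δ sd

/-- The partition `𝔓 = {𝔭_δ ∣ δ ∈ Δ}` with `𝔭_δ = {δ^[i] ∣ i ∈ [sd δ]}`. -/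
def mdgPart (Δ : Type) (sd : Δ → ℕ) : Set (Set (MSig Δ sd)) :=
  {s | ∃ δ : Δ, s = {p : MSig Δ sd | p.1.1 = δ}}

/-- Sorts of the non-terminals `A₁, …, A_k` (0-based: `A_{i+1}` has sort `i+1`). -/
def dyckSort (k : ℕ) : Fin k → ℕ := fun i => (i : ℕ) + 1

/-- Productions of type (i): `A_s → f(A_{s₁}, …, A_{s_ℓ})` for every linear
non-deleting terminal-free string function `f` with `ℓ ≤ r`. -/
def TypeI (Δ : Type) (sd : Δ → ℕ) (k r : ℕ)
    (ρ : Production (MAlph Δ sd) (Fin k) (dyckSort k)) : Prop :=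
  ρ.rhs.length ≤ r ∧ ρ.NonDeleting ∧ ρ.TerminalFree

/-- Productions of type (ii):
`A_s → [δ^[1] x₁^1 δ̄^[1], …, δ^[s] x₁^s δ̄^[s]](A_s)` for `δ` of sort `s`. -/
def TypeII (Δ : Type) (sd : Δ → ℕ) (k : ℕ)
    (ρ : Production (MAlph Δ sd) (Fin k) (dyckSort k)) : Prop :=
  ∃ δ : Δ, dyckSort k ρ.lhs = sd δ ∧ ρ.rhs = [ρ.lhs] ∧
    ρ.comp = List.ofFn (fun j : Fin (sd δ) =>
      [Sum.inl (Sum.inl ⟨(δ, (j : ℕ)), j.isLt⟩),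
       Sum.inr ((0 : ℕ), (j : ℕ)),
       Sum.inl (Sum.inr ⟨(δ, (j : ℕ)), j.isLt⟩)])

/-- Productions of type (iii): `A_s → [u₁, …, u_s](A_s)` where each
`u_j ∈ {x_j, x_j δ^[1] δ̄^[1], δ^[1] δ̄^[1] x_j}` for `δ` of sort 1. -/
def TypeIII (Δ : Type) (sd : Δ → ℕ) (k : ℕ)
    (ρ : Production (MAlph Δ sd) (Fin k) (dyckSort k)) : Prop :=
  ρ.rhs = [ρ.lhs] ∧
  ∀ (j : ℕ) (h : j < ρ.comp.length),
    ρ.comp.get ⟨j, h⟩ = [Sum.inr ((0 : ℕ), j)] ∨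
    ∃ (δ : Δ) (h1 : 0 < sd δ), sd δ = 1 ∧
      (ρ.comp.get ⟨j, h⟩ =
        [Sum.inr ((0 : ℕ), j),
         Sum.inl (Sum.inl ⟨(δ, 0), h1⟩), Sum.inl (Sum.inr ⟨(δ, 0), h1⟩)] ∨
       ρ.comp.get ⟨j, h⟩ =
        [Sum.inl (Sum.inl ⟨(δ, 0), h1⟩), Sum.inl (Sum.inr ⟨(δ, 0), h1⟩),
         Sum.inr ((0 : ℕ), j)])

/-- The productions of the multiple Dyck grammar `G_Δ`. -/
def mdgProds (Δ : Type) (sd : Δ → ℕ) (k r : ℕ) :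
    Set (Production (MAlph Δ sd) (Fin k) (dyckSort k)) :=
  {ρ | TypeI Δ sd k r ρ ∨ TypeII Δ sd k ρ ∨ TypeIII Δ sd k ρ}

/-- The multiple Dyck grammar `G_Δ` with respect to the sorted set `(Δ, sd)`. -/
def mdgGrammar (Δ : Type) (sd : Δ → ℕ) (k r : ℕ) (hk : 0 < k) :
    MCFG (MAlph Δ sd) where
  N := Fin k
  sortN := dyckSort k
  S := ⟨0, hk⟩
  sort_S := rfl
  P := mdgProds Δ sd k r

end CS
namespace CS

lemma bigSum_sub {A I : Type} [CCSBimonoid A] (S : Set I) (hS : S.Countable) (f : I → A) :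
    CCSBimonoid.bigSum S f = CCSBimonoid.bigSum (Set.univ : Set S) (fun j => f j) := by
  haveI := hS.to_subtype
  have h := CCSBimonoid.bigSum_partition (A := A) (fun j : S => ({(j : I)} : Set I)) f (by
    intro j j' hj
    ext x
    simp only [Set.mem_inter_iff, Set.mem_singleton_iff, Set.mem_empty_iff_false, iff_false]
    rintro ⟨h1, h2⟩
    exact hj (Subtype.ext (h1.symm.trans h2)))
  have h2 : (⋃ j : S, ({(j : I)} : Set I)) = S := by ext x; simp
  rw [h2] at h
  rw [← h]
  simp only [CCSBimonoid.bigSum_singleton]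

lemma bigSum_zero {A I : Type} [CCSBimonoid A] (S : Set I) (hS : S.Countable) (f : I → A)
    (hf : ∀ i ∈ S, f i = 0) : CCSBimonoid.bigSum S f = 0 := by
  haveI := hS.to_subtype
  rw [bigSum_sub S hS f]
  have h := CCSBimonoid.bigSum_partition (A := A) (fun _ : S => (∅ : Set I)) f (by simp)
  simp only [CCSBimonoid.bigSum_empty, Set.iUnion_empty] at h
  rw [← h]
  congr 1
  funext j
  exact hf j j.2

lemma bigSum_reindex {A I J : Type} [CCSBimonoid A] (S : Set I) (hS : S.Countable)
    (S' : Set J) (hS' : S'.Countable) (f : I → A) (f' : J → A) (e : J → I)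
    (he : Set.InjOn e S') (hm : Set.MapsTo e S' S) (hf : ∀ j ∈ S', f (e j) = f' j)
    (h0 : ∀ i ∈ S, i ∉ e '' S' → f i = 0) :
    CCSBimonoid.bigSum S f = CCSBimonoid.bigSum S' f' := by
  haveI := hS'.to_subtype
  have h1 : CCSBimonoid.bigSum S' f' = CCSBimonoid.bigSum (e '' S') f := by
    have h := CCSBimonoid.bigSum_partition (A := A) (fun j : S' => ({e j} : Set I)) f (by
      intro j j' hj
      ext x
      simp only [Set.mem_inter_iff, Set.mem_singleton_iff, Set.mem_empty_iff_false, iff_false]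
      rintro ⟨h1, h2⟩
      exact hj (Subtype.ext (he j.2 j'.2 (h1.symm.trans h2))))
    have h2 : (⋃ j : S', ({e j} : Set I)) = e '' S' := by
      ext x; simp [eq_comm]
    rw [h2] at h
    rw [← h, bigSum_sub S' hS']
    congr 1
    funext j
    rw [CCSBimonoid.bigSum_singleton, hf j j.2]
  have h2 := CCSBimonoid.bigSum_partition (A := A)
    (fun b : Bool => if b then e '' S' else S \ e '' S') f (by
      intro b b' hb
      cases b <;> cases b' <;> simp_all)
  have h3 : (⋃ b : Bool, (if b then e '' S' else S \ e '' S')) = S := by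
    ext x
    simp only [Set.mem_iUnion, Bool.exists_bool]
    have := hm.image_subset
    simp only [if_true, Bool.false_eq_true, if_false]
    constructor
    · rintro (h | h)
      · exact h.1
      · exact this h
    · intro h
      by_cases h' : x ∈ e '' S'
      · exact Or.inr h'
      · exact Or.inl ⟨h, h'⟩
  have h4 : (Set.univ : Set Bool) = {true, false} := by ext b; cases b <;> simp
  rw [h3, h4, CCSBimonoid.bigSum_pair _ _ _ (by simp)] at h2
  rw [← h2, h1]
  simp only [if_true, Bool.false_eq_true, if_false]
  rw [bigSum_zero (S \ e '' S') (hS.mono Set.diff_subset) f (fun i hi => h0 i hi.1 hi.2), add_zero]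

lemma splits_countable {Δ : Type} (n : ℕ) (u : List Δ) :
    {ds : List (List Δ) | ds.length = n ∧ ds.flatten = u}.Countable := by
  apply Set.MapsTo.countable_of_injOn (f := List.map List.length) (t := Set.univ)
    (fun _ _ => Set.mem_univ _) _ (Set.to_countable _)
  intro a ha b hb hab
  exact List.eq_iff_flatten_eq.2 ⟨ha.2.trans hb.2.symm, hab⟩

/-- Insert empty words at the erased positions. -/
def ins {S Γ Δ : Type} (h2 : S → Option Γ) : List S → List (List Δ) → List (List Δ)
  | [], _ => []
  | s :: w, ds => match h2 s with
    | none => [] :: ins h2 w ds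
    | some _ => ds.headD [] :: ins h2 w ds.tail

/-- The composed weighted homomorphism. -/
def gcomp {A S Γ Δ : Type} [CCSBimonoid A] (g1 : Γ → List Δ → A) (h2 : S → Option Γ) :
    S → List Δ → A := fun s u => match h2 s with
  | some γ => g1 γ u
  | none => match u with
    | [] => 1
    | _ :: _ => 0

section
variable {A S Γ Δ : Type} [CCSBimonoid A] (g1 : Γ → List Δ → A) (h2 : S → Option Γ)

lemma gcomp_some {s : S} {γ : Γ} (h : h2 s = some γ) (u : List Δ) :
    gcomp g1 h2 s u = g1 γ u := by simp [gcomp, h]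

lemma gcomp_nil {s : S} (h : h2 s = none) :
    gcomp g1 h2 s ([] : List Δ) = 1 := by simp [gcomp, h]

lemma gcomp_cons {s : S} (h : h2 s = none) (a : Δ) (u : List Δ) :
    gcomp g1 h2 s (a :: u) = 0 := by simp [gcomp, h]

lemma ins_none {s : S} (h : h2 s = none) (w : List S) (ds : List (List Δ)) :
    ins h2 (s :: w) ds = [] :: ins h2 w ds := by simp [ins, h]

lemma ins_some {s : S} {γ : Γ} (h : h2 s = some γ) (w : List S) (d : List Δ)
    (ds : List (List Δ)) :
    ins h2 (s :: w) (d :: ds) = d :: ins h2 w ds := by simp [ins, h]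

lemma ins_spec (w : List S) : ∀ ds : List (List Δ), ds.length = (w.filterMap h2).length →
    (ins h2 w ds).length = w.length ∧ (ins h2 w ds).flatten = ds.flatten ∧
    ((w.zip (ins h2 w ds)).map (fun p => gcomp g1 h2 p.1 p.2)).prod =
      (((w.filterMap h2).zip ds).map (fun p => g1 p.1 p.2)).prod := by
  induction w with
  | nil =>
    intro ds h
    have : ds = [] := by simpa using h
    subst this
    simp [ins]
  | cons s w ih =>
    intro ds h
    cases hs : h2 s with
    | none =>
      rw [List.filterMap_cons_none hs] at h ⊢
      obtain ⟨a, b, c⟩ := ih ds h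
      rw [ins_none h2 hs]
      simp [a, b, c, gcomp_nil g1 h2 hs]
    | some γ =>
      rw [List.filterMap_cons_some hs] at h ⊢
      cases ds with
      | nil => simp at h
      | cons d ds =>
        obtain ⟨a, b, c⟩ := ih ds (by simpa using h)
        rw [ins_some h2 hs]
        simp [a, b, c, gcomp_some g1 h2 hs]

lemma ins_inj (w : List S) : ∀ ds ds' : List (List Δ), ds.length = (w.filterMap h2).length →
    ds'.length = (w.filterMap h2).length → ins h2 w ds = ins h2 w ds' → ds = ds' := by
  induction w with
  | nil =>
    intro ds ds' h h' _
    have e : ds = [] := by simpa using h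
    have e' : ds' = [] := by simpa using h'
    rw [e, e']
  | cons s w ih =>
    intro ds ds' h h' heq
    cases hs : h2 s with
    | none =>
      rw [List.filterMap_cons_none hs] at h h'
      rw [ins_none h2 hs, ins_none h2 hs] at heq
      exact ih ds ds' h h' (List.cons.inj heq).2
    | some γ =>
      rw [List.filterMap_cons_some hs] at h h'
      cases ds with
      | nil => simp at h
      | cons d ds =>
        cases ds' with
        | nil => simp at h'
        | cons d' ds' =>
          rw [ins_some h2 hs, ins_some h2 hs] at heq
          obtain ⟨e1, e2⟩ := List.cons.inj heq
          rw [e1, ih ds ds' (by simpa using h) (by simpa using h') e2]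

lemma ins_surj (w : List S) : ∀ es : List (List Δ), es.length = w.length →
    ((w.zip es).map (fun p => gcomp g1 h2 p.1 p.2)).prod = 0 ∨
    ∃ ds : List (List Δ), ds.length = (w.filterMap h2).length ∧ ins h2 w ds = es := by
  induction w with
  | nil =>
    intro es h
    have e : es = [] := by simpa using h
    exact Or.inr ⟨[], by simp, by simp [ins, e]⟩
  | cons s w ih =>
    intro es h
    cases es with
    | nil => simp at h
    | cons d es =>
      rcases ih es (by simpa using h) with h0 | ⟨ds, hd, hi⟩
      · left
        simp [h0, CCSBimonoid.mul_zero']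
      · cases hs : h2 s with
        | none =>
          cases d with
          | nil =>
            right
            exact ⟨ds, by rw [List.filterMap_cons_none hs, hd], by rw [ins_none h2 hs, hi]⟩
          | cons a d =>
            left
            simp [gcomp_cons g1 h2 hs, CCSBimonoid.zero_mul']
        | some γ =>
          right
          exact ⟨d :: ds, by rw [List.filterMap_cons_some hs]; simp [hd],
            by rw [ins_some h2 hs, hi]⟩

lemma whom_gcomp (w : List S) : whom (gcomp g1 h2) w = whom g1 (w.filterMap h2) := by
  funext u
  unfold whom
  apply bigSum_reindex _ (splits_countable _ _) _ (splits_countable _ _) _ _ (ins h2 w)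
  · intro a ha b hb hab
    exact ins_inj h2 w a b ha.1 hb.1 hab
  · intro a ha
    obtain ⟨x, y, _⟩ := ins_spec g1 h2 w a ha.1
    exact ⟨x, y.trans ha.2⟩
  · intro a ha
    exact (ins_spec g1 h2 w a ha.1).2.2
  · intro es hes hn
    rcases ins_surj g1 h2 w es hes.1 with h | ⟨ds, hd, hi⟩
    · exact h
    · refine absurd ⟨ds, ⟨hd, ?_⟩, hi⟩ hn
      rw [← (ins_spec g1 h2 w ds hd).2.1, hi, hes.2]

lemma gcomp_alph (hg : AlphabeticWeightedHom g1) : AlphabeticWeightedHom (gcomp g1 h2) := by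
  refine ⟨fun s u v hu hv => ?_, fun s u hu => ?_⟩
  · cases hs : h2 s with
    | none =>
      cases u with
      | cons a u => exact absurd (gcomp_cons g1 h2 hs a u) hu
      | nil =>
        cases v with
        | nil => rfl
        | cons a v => exact absurd (gcomp_cons g1 h2 hs a v) hv
    | some γ =>
      rw [gcomp_some g1 h2 hs] at hu hv
      exact hg.1 γ u v hu hv
  · cases hs : h2 s with
    | none =>
      cases u with
      | cons a u => exact absurd (gcomp_cons g1 h2 hs a u) hu
      | nil => simp
    | some γ =>
      rw [gcomp_some g1 h2 hs] at hu
      exact hg.2 γ u hu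

end

end CS

/-- Composition of weighted and unweighted alphabetic
homomorphisms: the composition of an `𝒜`-weighted alphabetic homomorphism with
an alphabetic homomorphism is an `𝒜`-weighted alphabetic homomorphism, and
conversely every `𝒜`-weighted alphabetic homomorphism arises this way.
Hence `aHOM(𝒜) ∘ aHOM = aHOM(𝒜)`. -/
theorem CS.alphabetic_hom_composition (A : Type) [CS.CCSBimonoid A] :
    (∀ (S Γ Δ : Type) (g1 : Γ → List Δ → A) (h2 : S → Option Γ),
      CS.AlphabeticWeightedHom g1 →
      ∃ g : S → List Δ → A, CS.AlphabeticWeightedHom g ∧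
        ∀ w : List S, CS.whom g w = CS.whom g1 (w.filterMap h2)) ∧
    (∀ (S Δ : Type) (g : S → List Δ → A), CS.AlphabeticWeightedHom g →
      ∃ (Γ : Type) (g1 : Γ → List Δ → A) (h2 : S → Option Γ),
        CS.AlphabeticWeightedHom g1 ∧
        ∀ w : List S, CS.whom g1 (w.filterMap h2) = CS.whom g w) := by
  refine ⟨fun S Γ Δ g1 h2 hg => ⟨CS.gcomp g1 h2, CS.gcomp_alph g1 h2 hg,
    fun w => CS.whom_gcomp g1 h2 w⟩, fun S Δ g hg => ⟨S, g, some, hg, fun w => ?_⟩⟩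
  rw [List.filterMap_some]
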